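/- arXiv:2203.10025 — 9 statements merged into one kernel-verified Lean document; each statement's English description precedes it below -/
import Mathlib

section
/- For every k > 0 there exist constants C₁, C₂ > 0 (depending only on k) such that for all real a ≥ 0 and x ≥ 0 one has C₁ B(a,x) ≤ ∫₀ˣ e^(-a u) (u/(1+u))^(k-1) du ≤ C₂ B(a,x), where B(a,x) = (x/(1+x))^k · (1+x)/(1+a x)^k · ((1+a(1+x))/(1+a))^(k-1). -/
open MeasureTheory Real

lemma aux_pow (p t : ℝ) (h1 : 1/2 ≤ t) (h2 : t ≤ 2) :
    (2:ℝ) ^ (-|p|) ≤ t ^ p ∧ t ^ p ≤ (2:ℝ) ^ |p| := by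
  have ht : 0 < t := by linarith
  have hl2 : Real.log t ≤ Real.log 2 := Real.log_le_log ht h2
  have hl1 : -Real.log 2 ≤ Real.log t := by
    have := Real.log_le_log (by norm_num) h1
    rwa [one_div, Real.log_inv] at this
  have habs : |Real.log t * p| ≤ Real.log 2 * |p| := by
    rw [abs_mul]
    exact mul_le_mul_of_nonneg_right (abs_le.2 ⟨hl1, hl2⟩) (abs_nonneg p)
  have h3 := abs_le.1 habs
  rw [Real.rpow_def_of_pos ht, Real.rpow_def_of_pos (by norm_num : (0:ℝ) < 2),
    Real.rpow_def_of_pos (by norm_num : (0:ℝ) < 2), Real.exp_le_exp, Real.exp_le_exp]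
  exact ⟨by linarith [h3.1], h3.2⟩

lemma aux_int (a x s : ℝ) (hs : 0 < s) :
    IntervalIntegrable (fun u : ℝ => Real.exp (-(a * u)) * u ^ (s - 1)) volume 0 x := by
  have h1 : IntervalIntegrable (fun u : ℝ => u ^ (s - 1)) volume 0 x :=
    intervalIntegral.intervalIntegrable_rpow' (by linarith)
  exact h1.continuousOn_mul (by fun_prop)

lemma aux_J (s : ℝ) (hs : 0 < s) : ∃ C : ℝ, 0 < C ∧ ∀ a x : ℝ, 0 ≤ a → 0 < x →
    (∫ u in (0:ℝ)..x, Real.exp (-(a * u)) * u ^ (s - 1)) ≤ C * (x / (1 + a * x)) ^ s := by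
  have hG : 0 < Real.Gamma s := Real.Gamma_pos_of_pos hs
  refine ⟨2 ^ s * (1 / s + Real.Gamma s), by positivity, fun a x ha hx => ?_⟩
  have hax : 0 ≤ a * x := by positivity
  set y := x / (1 + a * x) with hy
  have hy0 : 0 < y := by positivity
  rcases le_total (a * x) 1 with h | h
  · have hxy : x ≤ 2 * y := by
      rw [hy, ← mul_div_assoc, le_div_iff₀ (by positivity)]; nlinarith
    have h1 : (∫ u in (0:ℝ)..x, Real.exp (-(a * u)) * u ^ (s - 1)) ≤
        ∫ u in (0:ℝ)..x, u ^ (s - 1) := by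
      apply intervalIntegral.integral_mono_on hx.le (aux_int a x s hs)
        (intervalIntegral.intervalIntegrable_rpow' (by linarith))
      intro u hu
      have : Real.exp (-(a * u)) ≤ 1 := Real.exp_le_one_iff.2 (by nlinarith [mul_nonneg ha hu.1])
      exact mul_le_of_le_one_left (Real.rpow_nonneg hu.1 _) this
    have h2 : (∫ u in (0:ℝ)..x, u ^ (s - 1)) = x ^ s / s := by
      rw [integral_rpow (Or.inl (by linarith))]
      simp [Real.zero_rpow hs.ne']
    have h3 : x ^ s ≤ 2 ^ s * y ^ s := by
      rw [← Real.mul_rpow (by norm_num) hy0.le]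
      exact Real.rpow_le_rpow hx.le hxy hs.le
    calc _ ≤ x ^ s / s := by rw [← h2]; exact h1
      _ ≤ (2 ^ s * y ^ s) / s := by gcongr
      _ = 2 ^ s * (1 / s) * y ^ s := by ring
      _ ≤ _ := by gcongr; linarith
  · have ha0 : 0 < a := by
      rcases ha.lt_or_eq with h' | h'
      · exact h'
      · rw [← h'] at h; norm_num at h
    have hxy : 1 / a ≤ 2 * y := by
      rw [hy, ← mul_div_assoc, div_le_div_iff₀ ha0 (by positivity)]; nlinarith
    have h2 := Real.integral_rpow_mul_exp_neg_mul_Ioi hs ha0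
    have hint : IntegrableOn (fun u : ℝ => u ^ (s - 1) * Real.exp (-(a * u))) (Set.Ioi 0) := by
      by_contra hc
      have := integral_undef hc
      rw [this] at h2
      have : 0 < (1 / a) ^ s * Real.Gamma s := by positivity
      linarith
    have h1 : (∫ u in (0:ℝ)..x, Real.exp (-(a * u)) * u ^ (s - 1)) ≤ (1 / a) ^ s * Real.Gamma s := by
      rw [← h2, intervalIntegral.integral_of_le hx.le]
      simp_rw [mul_comm (Real.exp _)]
      apply setIntegral_mono_set hint
      · filter_upwards [ae_restrict_mem measurableSet_Ioi] with u hu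
        have : (0:ℝ) < u := hu
        simp only [Pi.zero_apply]
        positivity
      · exact Set.Ioc_subset_Ioi_self.eventuallyLE
    have h3 : (1 / a) ^ s ≤ 2 ^ s * y ^ s := by
      rw [← Real.mul_rpow (by norm_num) hy0.le]
      exact Real.rpow_le_rpow (by positivity) hxy hs.le
    calc _ ≤ (1 / a) ^ s * Real.Gamma s := h1
      _ ≤ (2 ^ s * y ^ s) * Real.Gamma s := by gcongr
      _ = 2 ^ s * (Real.Gamma s) * y ^ s := by ring
      _ ≤ _ := by
        gcongr
        have : 0 < 1 / s := by positivity
        linarith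

lemma aux_pt (k y u : ℝ) (hy : 0 < y) (hu : 0 < u) :
    (u / (1 + u)) ^ (k - 1) ≤ (y / (1 + y)) ^ (k - 1) * (1 + (u / y) ^ (k - 1)) := by
  have hw : 0 < y / (1 + y) := by positivity
  have hh : 0 < u / (1 + u) := by positivity
  have A : (y / (1 + y)) ^ (k - 1) * (u / y) ^ (k - 1) = ((y / (1 + y)) * (u / y)) ^ (k - 1) :=
    (Real.mul_rpow hw.le (by positivity)).symm
  have hm : (y / (1 + y)) * (u / y) = u / (1 + y) := by field_simp
  rw [mul_add, mul_one, A, hm]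
  have p1 : 0 < (y / (1 + y)) ^ (k - 1) := by positivity
  have p2 : 0 < (u / (1 + y)) ^ (k - 1) := by positivity
  have B1 : y ≤ u → y / (1 + y) ≤ u / (1 + u) ∧ u / (1 + u) ≤ u / (1 + y) := by
    intro h
    constructor
    · rw [div_le_div_iff₀ (by positivity) (by positivity)]; nlinarith
    · gcongr
  have B2 : u ≤ y → u / (1 + u) ≤ y / (1 + y) ∧ u / (1 + y) ≤ u / (1 + u) := by
    intro h
    constructor
    · rw [div_le_div_iff₀ (by positivity) (by positivity)]; nlinarith
    · gcongr
  rcases le_total 0 (k - 1) with hk | hk <;> rcases le_total u y with h | h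
  · linarith [Real.rpow_le_rpow hh.le (B2 h).1 hk]
  · linarith [Real.rpow_le_rpow hh.le (B1 h).2 hk]
  · linarith [Real.rpow_le_rpow_of_nonpos (by positivity) (B2 h).2 hk]
  · linarith [Real.rpow_le_rpow_of_nonpos hw (B1 h).1 hk]

lemma aux_B (k a x : ℝ) (ha : 0 ≤ a) (hx : 0 < x) :
    ∃ r : ℝ, 1 / 2 ≤ r ∧ r ≤ 2 ∧
    (x / (1 + x)) ^ k * ((1 + x) / (1 + a * x) ^ k) * ((1 + a * (1 + x)) / (1 + a)) ^ (k - 1)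
     = (x / (1 + a * x)) * ((x / (1 + a * x)) / (1 + x / (1 + a * x))) ^ (k - 1) * r ^ (k - 1) := by
  have hax : 0 ≤ a * x := by positivity
  refine ⟨(1 + x + a * x) * (1 + a * (1 + x)) / ((1 + x) * (1 + a * x) * (1 + a)), ?_, ?_, ?_⟩
  · rw [div_le_div_iff₀ (by positivity) (by positivity)]
    have h1 : 0 ≤ a * x * x := by positivity
    have h2 : 0 ≤ a * a * x := by positivity
    have h3 : 0 ≤ a * a * x * x := by positivity
    nlinarith
  · rw [div_le_iff₀ (by positivity)]
    have h1 : 0 ≤ a * x * x := by positivity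
    have h2 : 0 ≤ a * a * x := by positivity
    have h3 : 0 ≤ a * a * x * x := by positivity
    nlinarith
  · have hk : ∀ t : ℝ, 0 < t → t ^ k = t ^ (k - 1) * t := fun t ht => by
      rw [Real.rpow_sub_one ht.ne']; field_simp
    rw [hk _ (by positivity : 0 < x / (1 + x)), hk _ (by positivity : 0 < 1 + a * x)]
    have e : (x / (1 + x)) ^ (k - 1) * ((1 + a * (1 + x)) / (1 + a)) ^ (k - 1) =
      ((x / (1 + a * x)) / (1 + x / (1 + a * x))) ^ (k - 1) *
       ((1 + x + a * x) * (1 + a * (1 + x)) / ((1 + x) * (1 + a * x) * (1 + a))) ^ (k - 1) *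
       (1 + a * x) ^ (k - 1) := by
      rw [← Real.mul_rpow (by positivity) (by positivity),
        ← Real.mul_rpow (by positivity) (by positivity),
        ← Real.mul_rpow (by positivity) (by positivity)]
      congr 1
      have : 1 + x / (1 + a * x) = (1 + x + a * x) / (1 + a * x) := by field_simp; ring
      rw [this]
      field_simp
    have hp : 0 < (1 + a * x) ^ (k - 1) := by positivity
    calc _ = ((x / (1 + x)) ^ (k - 1) * ((1 + a * (1 + x)) / (1 + a)) ^ (k - 1)) *
          (x / ((1 + a * x) ^ (k - 1) * (1 + a * x))) := by
            have : 1 + x ≠ 0 := by positivity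
            field_simp
      _ = _ := by rw [e]; field_simp

theorem stmt_1 (k : ℝ) (hk : 0 < k) :
    ∃ C₁ C₂ : ℝ, 0 < C₁ ∧ 0 < C₂ ∧ ∀ a x : ℝ, 0 ≤ a → 0 ≤ x →
      C₁ * ((x / (1 + x)) ^ k * ((1 + x) / (1 + a * x) ^ k) *
          ((1 + a * (1 + x)) / (1 + a)) ^ (k - 1)) ≤
        (∫ u in (0:ℝ)..x, Real.exp (-(a * u)) * (u / (1 + u)) ^ (k - 1)) ∧
      (∫ u in (0:ℝ)..x, Real.exp (-(a * u)) * (u / (1 + u)) ^ (k - 1)) ≤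
        C₂ * ((x / (1 + x)) ^ k * ((1 + x) / (1 + a * x) ^ k) *
          ((1 + a * (1 + x)) / (1 + a)) ^ (k - 1)) := by
  obtain ⟨D1, hD1, H1⟩ := aux_J 1 one_pos
  obtain ⟨D2, hD2, H2⟩ := aux_J k hk
  set M : ℝ := (2:ℝ) ^ |k - 1| with hM
  set m : ℝ := (2:ℝ) ^ (-|k - 1|) with hm
  have hM0 : 0 < M := by positivity
  have hm0 : 0 < m := by positivity
  have hmM : m * M = 1 := by
    rw [hm, hM, ← Real.rpow_add (by norm_num)]; simp
  refine ⟨Real.exp (-1) * (1 / 2) * m * m, (D1 + D2) * M, by positivity, by positivity, ?_⟩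
  intro a x ha hx
  rcases hx.eq_or_lt with rfl | hx
  · simp [Real.zero_rpow hk.ne']
  obtain ⟨r, hr1, hr2, hB⟩ := aux_B k a x ha hx
  rw [hB]
  obtain ⟨hrm, hrM⟩ := aux_pow (k - 1) r hr1 hr2
  rw [← hM] at hrM
  rw [← hm] at hrm
  have hax : 0 ≤ a * x := by positivity
  set y := x / (1 + a * x) with hy
  have hy0 : 0 < y := by positivity
  have hyx : y ≤ x := div_le_self hx.le (by linarith)
  have hay : a * y ≤ 1 := by
    rw [hy, ← mul_div_assoc, div_le_one (by positivity)]; linarith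
  set W := (y / (1 + y)) ^ (k - 1) with hW
  have hW0 : 0 < W := by positivity
  -- the dominating function
  have i1 := aux_int a x 1 one_pos
  have i2 := aux_int a x k hk
  have idom : IntervalIntegrable (fun u : ℝ => W * (Real.exp (-(a * u)) * u ^ ((1:ℝ) - 1)) +
      W * (y ^ (k - 1))⁻¹ * (Real.exp (-(a * u)) * u ^ (k - 1))) volume 0 x :=
    (i1.const_mul _).add (i2.const_mul _)
  have hpt : ∀ u : ℝ, 0 < u → Real.exp (-(a * u)) * (u / (1 + u)) ^ (k - 1) ≤
      W * (Real.exp (-(a * u)) * u ^ ((1:ℝ) - 1)) +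
      W * (y ^ (k - 1))⁻¹ * (Real.exp (-(a * u)) * u ^ (k - 1)) := by
    intro u hu
    have := mul_le_mul_of_nonneg_left (aux_pt k y u hy0 hu) (Real.exp_nonneg (-(a * u)))
    refine this.trans (le_of_eq ?_)
    rw [Real.div_rpow hu.le hy0.le, sub_self, Real.rpow_zero]
    ring
  have iphi : IntervalIntegrable
      (fun u : ℝ => Real.exp (-(a * u)) * (u / (1 + u)) ^ (k - 1)) volume 0 x := by
    refine idom.mono_fun' (Measurable.aestronglyMeasurable (by fun_prop)) ?_
    rw [Set.uIoc_of_le hx.le]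
    filter_upwards [ae_restrict_mem measurableSet_Ioc] with u hu
    have hu0 : 0 < u := hu.1
    rw [Real.norm_of_nonneg (by positivity)]
    exact hpt u hu0
  constructor
  · have s1 : (∫ u in (y/2)..y, Real.exp (-1) * (m * W)) ≤
        ∫ u in (y/2)..y, Real.exp (-(a * u)) * (u / (1 + u)) ^ (k - 1) := by
      apply intervalIntegral.integral_mono_on (by linarith) (by simp)
      · apply iphi.mono_set
        rw [Set.uIcc_of_le (by linarith), Set.uIcc_of_le hx.le]
        exact Set.Icc_subset_Icc (by linarith) hyx
      · intro u hu
        have hu0 : 0 < u := by linarith [hu.1]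
        have e1 : Real.exp (-1) ≤ Real.exp (-(a * u)) := by
          rw [Real.exp_le_exp]
          have := mul_le_mul_of_nonneg_left hu.2 ha
          linarith
        have e2 : m * W ≤ (u / (1 + u)) ^ (k - 1) := by
          have e3 : u / (1 + u) = (u * (1 + y) / ((1 + u) * y)) * (y / (1 + y)) := by
            field_simp
          rw [e3, Real.mul_rpow (by positivity) (by positivity)]
          apply mul_le_mul_of_nonneg_right _ hW0.le
          apply (aux_pow _ _ _ _).1
          · rw [div_le_div_iff₀ (by norm_num) (by positivity)]
            nlinarith [hu.1, mul_pos hu0 hy0]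
          · rw [div_le_iff₀ (by positivity)]
            nlinarith [hu.2, mul_pos hu0 hy0]
        exact mul_le_mul e1 e2 (by positivity) (by positivity)
    have s2 : (∫ u in (y/2)..y, Real.exp (-(a * u)) * (u / (1 + u)) ^ (k - 1)) ≤
        ∫ u in (0:ℝ)..x, Real.exp (-(a * u)) * (u / (1 + u)) ^ (k - 1) := by
      apply intervalIntegral.integral_mono_interval (by linarith) (by linarith) hyx _ iphi
      filter_upwards [ae_restrict_mem measurableSet_Ioc] with u hu
      have hu0 : 0 < u := hu.1
      simp only [Pi.zero_apply]
      positivity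
    rw [intervalIntegral.integral_const, smul_eq_mul] at s1
    refine le_trans ?_ (s1.trans s2)
    calc _ = (y / 2) * (Real.exp (-1) * (m * W)) * (m * r ^ (k - 1)) := by ring
      _ ≤ (y / 2) * (Real.exp (-1) * (m * W)) * (m * M) := by gcongr
      _ = _ := by rw [hmM]; ring
  · have t1 := intervalIntegral.integral_mono_on_of_le_Ioo hx.le iphi idom
      (fun u hu => hpt u hu.1)
    rw [intervalIntegral.integral_add (i1.const_mul _) (i2.const_mul _),
      intervalIntegral.integral_const_mul, intervalIntegral.integral_const_mul] at t1
    have h1 := H1 a x ha hx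
    have h2 := H2 a x ha hx
    rw [← hy] at h1 h2
    rw [Real.rpow_one] at h1
    have hyk : y ^ k = y ^ (k - 1) * y := by
      rw [Real.rpow_sub_one hy0.ne']; field_simp
    have hyp : 0 < y ^ (k - 1) := by positivity
    have hMr : 1 ≤ M * r ^ (k - 1) := by
      have := mul_le_mul_of_nonneg_left hrm hM0.le
      linarith
    calc _ ≤ _ := t1
      _ ≤ W * (D1 * y) + W * (y ^ (k - 1))⁻¹ * (D2 * y ^ k) := by gcongr
      _ = (D1 + D2) * (y * W) * 1 := by rw [hyk]; field_simp
      _ ≤ (D1 + D2) * (y * W) * (M * r ^ (k - 1)) := by gcongr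
      _ = _ := by ring
end

section
/- Let a ≥ 0 and 0 < k ≤ 1 be real numbers. Then the function F₂(u) = u (1 + a(1+u))^(k-1) / (1 + a u)^k is monotone increasing on [0, ∞); that is, for all 0 ≤ u ≤ v one has F₂(u) ≤ F₂(v). -/
theorem stmt_2_aux (a k : ℝ) (ha : 0 ≤ a) (u : ℝ) (hu : 0 ≤ u) :
    u * (1 + a * (1 + u)) ^ (k - 1) / (1 + a * u) ^ k =
      (u / (1 + a * (1 + u))) ^ (1 - k) * (u / (1 + a * u)) ^ k := by
  have hA : 0 < 1 + a * u := by positivity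
  have hB : 0 < 1 + a * (1 + u) := by positivity
  have h1 : u = u ^ (1 - k) * u ^ k := by
    rw [← Real.rpow_add' hu (by norm_num)]
    norm_num
  rw [Real.div_rpow hu hB.le, Real.div_rpow hu hA.le,
    show k - 1 = -(1 - k) by ring, Real.rpow_neg hB.le, div_mul_div_comm, ← h1,
    ← div_eq_mul_inv, div_div]

theorem stmt_2 (a k : ℝ) (ha : 0 ≤ a) (hk0 : 0 < k) (hk1 : k ≤ 1) :
    ∀ u v : ℝ, 0 ≤ u → u ≤ v →
      u * (1 + a * (1 + u)) ^ (k - 1) / (1 + a * u) ^ k ≤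
        v * (1 + a * (1 + v)) ^ (k - 1) / (1 + a * v) ^ k := by
  intro u v hu huv
  have hv : 0 ≤ v := hu.trans huv
  rw [stmt_2_aux a k ha u hu, stmt_2_aux a k ha v hv]
  have h1 : u / (1 + a * (1 + u)) ≤ v / (1 + a * (1 + v)) := by
    rw [div_le_div_iff₀ (by positivity) (by positivity)]
    nlinarith [mul_le_mul_of_nonneg_left huv ha]
  have h2 : u / (1 + a * u) ≤ v / (1 + a * v) := by
    rw [div_le_div_iff₀ (by positivity) (by positivity)]
    nlinarith
  exact mul_le_mul (Real.rpow_le_rpow (by positivity) h1 (by linarith))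
    (Real.rpow_le_rpow (by positivity) h2 hk0.le) (by positivity) (by positivity)
end

section
/- Let k > 0, u ≥ 0 and a > 0 be real numbers. Then 1/(1+a) ≤ (1+u)/(1+a u)^k · (1 + (1+u) a)^(k-1) ≤ (1+a)^k / a. -/
theorem stmt_4 (k u a : ℝ) (hk : 0 < k) (hu : 0 ≤ u) (ha : 0 < a) :
    1 / (1 + a) ≤ (1 + u) / (1 + a * u) ^ k * (1 + (1 + u) * a) ^ (k - 1) ∧
      (1 + u) / (1 + a * u) ^ k * (1 + (1 + u) * a) ^ (k - 1) ≤ (1 + a) ^ k / a := by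
  have hau : 0 ≤ a * u := by positivity
  have hA : 0 < 1 + a * u := by positivity
  have hB : 0 < 1 + (1 + u) * a := by positivity
  have key : (1 + u) / (1 + a * u) ^ k * (1 + (1 + u) * a) ^ (k - 1)
      = (1 + u) / (1 + (1 + u) * a) * ((1 + (1 + u) * a) / (1 + a * u)) ^ k := by
    rw [Real.rpow_sub_one hB.ne', Real.div_rpow hB.le hA.le]
    ring
  rw [key]
  have h1 : 1 ≤ ((1 + (1 + u) * a) / (1 + a * u)) ^ k := by
    apply Real.one_le_rpow _ hk.le
    rw [le_div_iff₀ hA]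
    nlinarith
  have h2 : ((1 + (1 + u) * a) / (1 + a * u)) ^ k ≤ (1 + a) ^ k := by
    apply Real.rpow_le_rpow (by positivity) _ hk.le
    rw [div_le_iff₀ hA]
    nlinarith [mul_nonneg ha.le hau]
  have h3 : 1 / (1 + a) ≤ (1 + u) / (1 + (1 + u) * a) := by
    rw [div_le_div_iff₀ (by positivity) hB]
    nlinarith
  have h4 : (1 + u) / (1 + (1 + u) * a) ≤ 1 / a := by
    rw [div_le_div_iff₀ hB ha]
    nlinarith
  constructor
  · calc _ ≤ _ := h3
      _ ≤ _ := le_mul_of_one_le_right (by positivity) h1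
  · calc _ ≤ 1 / a * (1 + a) ^ k := mul_le_mul h4 h2 (by positivity) (by positivity)
      _ = _ := by ring
end

section
/- Fix k > 0 and define f(a, x) = (1 + a(1+x))^(k-1) / ((1 + a x)^k (1 + a)^(k-1)) for a, x ≥ 0. There exist constants C₁, C₂ > 0 depending only on k such that: (i) if a x ≤ 1 then C₁ ≤ f(a,x) ≤ C₂; (ii) if a x ≥ 1 and x ≤ 1 then C₁ (a x)^(-k) ≤ f(a,x) ≤ C₂ (a x)^(-k); (iii) if a x ≥ 1, x ≥ 1 and a ≤ 1 then C₁ (a x)^(-1) ≤ f(a,x) ≤ C₂ (a x)^(-1); (iv) if a x ≥ 1, x ≥ 1 and a ≥ 1 then C₁ a^(-k) x^(-1) ≤ f(a,x) ≤ C₂ a^(-k) x^(-1). -/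
noncomputable def f₆ (k a x : ℝ) : ℝ :=
  (1 + a * (1 + x)) ^ (k - 1) / ((1 + a * x) ^ k * (1 + a) ^ (k - 1))

lemma aux_pow_s6 (K p y z : ℝ) (hp : |p| ≤ K) (hy : 0 < y) (h1 : y ≤ z) (h2 : z ≤ 4 * y) :
    z ^ p ≤ (4:ℝ) ^ K * y ^ p ∧ y ^ p ≤ (4:ℝ) ^ K * z ^ p := by
  have hz : 0 < z := lt_of_lt_of_le hy h1
  obtain ⟨hp1, hp2⟩ := abs_le.mp hp
  have l1 : Real.log y ≤ Real.log z := Real.log_le_log hy h1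
  have l2 : Real.log z ≤ Real.log 4 + Real.log y := by
    rw [← Real.log_mul (by norm_num) hy.ne']
    exact Real.log_le_log hz h2
  have l4 : (0:ℝ) < 4 := by norm_num
  rw [Real.rpow_def_of_pos hz, Real.rpow_def_of_pos hy, Real.rpow_def_of_pos l4,
    ← Real.exp_add, ← Real.exp_add, Real.exp_le_exp, Real.exp_le_exp]
  have hK : 0 ≤ K := (abs_nonneg p).trans hp
  constructor
  · nlinarith [mul_nonneg (sub_nonneg.2 l1) (sub_nonneg.2 hp2), mul_nonneg hK (sub_nonneg.2 l2)]
  · nlinarith [mul_nonneg (sub_nonneg.2 l1) (by linarith : 0 ≤ p + K),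
      mul_nonneg hK (sub_nonneg.2 l2)]

lemma aux_main (k : ℝ) (hk : 0 < k) (a x n d e T : ℝ) (hn : 0 < n) (hd : 0 < d) (he : 0 < e)
    (n1 : n ≤ 1 + a * (1 + x)) (n2 : 1 + a * (1 + x) ≤ 4 * n)
    (d1 : d ≤ 1 + a * x) (d2 : 1 + a * x ≤ 4 * d)
    (e1 : e ≤ 1 + a) (e2 : 1 + a ≤ 4 * e)
    (hT : T = n ^ (k - 1) / (d ^ k * e ^ (k - 1))) :
    (((4:ℝ) ^ (k + 1)) ^ 3)⁻¹ * T ≤ f₆ k a x ∧ f₆ k a x ≤ ((4:ℝ) ^ (k + 1)) ^ 3 * T := by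
  have hp1 : |k - 1| ≤ k + 1 := abs_le.mpr ⟨by linarith, by linarith⟩
  have hp2 : |k| ≤ k + 1 := abs_le.mpr ⟨by linarith, by linarith⟩
  obtain ⟨N1, N2⟩ := aux_pow_s6 _ _ _ _ hp1 hn n1 n2
  obtain ⟨D1, D2⟩ := aux_pow_s6 _ _ _ _ hp2 hd d1 d2
  obtain ⟨E1, E2⟩ := aux_pow_s6 _ _ _ _ hp1 he e1 e2
  subst hT
  unfold f₆
  have pn := Real.rpow_pos_of_pos hn (k - 1)
  have pd := Real.rpow_pos_of_pos hd k
  have pe := Real.rpow_pos_of_pos he (k - 1)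
  have pN := Real.rpow_pos_of_pos (hn.trans_le n1) (k - 1)
  have pD := Real.rpow_pos_of_pos (hd.trans_le d1) k
  have pE := Real.rpow_pos_of_pos (he.trans_le e1) (k - 1)
  have pM := Real.rpow_pos_of_pos (by norm_num : (0:ℝ) < 4) (k + 1)
  generalize (4:ℝ) ^ (k + 1) = M at *
  generalize n ^ (k - 1) = n' at *
  generalize d ^ k = d' at *
  generalize e ^ (k - 1) = e' at *
  generalize (1 + a * (1 + x)) ^ (k - 1) = N' at *
  generalize (1 + a * x) ^ k = D' at *
  generalize (1 + a) ^ (k - 1) = E' at *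
  constructor
  · rw [inv_mul_le_iff₀ (by positivity), ← mul_div_assoc, div_le_div_iff₀ (by positivity) (by positivity)]
    calc n' * (D' * E') ≤ (M * N') * ((M * d') * (M * e')) := by gcongr
      _ = _ := by ring
  · rw [← mul_div_assoc, div_le_div_iff₀ (by positivity) (by positivity)]
    calc N' * (d' * e') ≤ (M * n') * ((M * D') * (M * E')) := by gcongr
      _ = _ := by ring

theorem stmt_6 (k : ℝ) (hk : 0 < k) :
    ∃ C₁ C₂ : ℝ, 0 < C₁ ∧ 0 < C₂ ∧ ∀ a x : ℝ, 0 ≤ a → 0 ≤ x →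
      (a * x ≤ 1 → C₁ ≤ f₆ k a x ∧ f₆ k a x ≤ C₂) ∧
      (1 ≤ a * x → x ≤ 1 →
        C₁ * (a * x) ^ (-k) ≤ f₆ k a x ∧ f₆ k a x ≤ C₂ * (a * x) ^ (-k)) ∧
      (1 ≤ a * x → 1 ≤ x → a ≤ 1 →
        C₁ * (a * x)⁻¹ ≤ f₆ k a x ∧ f₆ k a x ≤ C₂ * (a * x)⁻¹) ∧
      (1 ≤ a * x → 1 ≤ x → 1 ≤ a →
        C₁ * (a ^ (-k) * x⁻¹) ≤ f₆ k a x ∧ f₆ k a x ≤ C₂ * (a ^ (-k) * x⁻¹)) := by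
  refine ⟨(((4:ℝ) ^ (k + 1)) ^ 3)⁻¹, ((4:ℝ) ^ (k + 1)) ^ 3, by positivity, by positivity, ?_⟩
  intro a x ha hx
  have hax : 0 ≤ a * x := mul_nonneg ha hx
  have hE : 0 < (1 + a) ^ (k - 1) := Real.rpow_pos_of_pos (by linarith) _
  refine ⟨fun h => ?_, fun h h1 => ?_, fun h h1 h2 => ?_, fun h h1 h2 => ?_⟩
  · have := aux_main k hk a x (1 + a) 1 (1 + a) 1 (by linarith) (by linarith) (by linarith)
      (by linarith) (by linarith) (by linarith) (by linarith) (by linarith) (by linarith)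
      (by rw [Real.one_rpow, one_mul, div_self hE.ne'])
    simpa only [mul_one] using this
  · have : a * x ≤ a := mul_le_of_le_one_right ha h1
    exact aux_main k hk a x (1 + a) (a * x) (1 + a) _ (by linarith) (by linarith) (by linarith)
      (by linarith) (by linarith) (by linarith) (by linarith) (by linarith) (by linarith)
      (by rw [Real.rpow_neg hax]; field_simp)
  · have hp : 0 < a * x := by linarith
    have := Real.rpow_pos_of_pos hp k
    exact aux_main k hk a x (a * x) (a * x) 1 _ (by linarith) (by linarith) (by linarith)
      (by linarith) (by linarith) (by linarith) (by linarith) (by linarith) (by linarith)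
      (by rw [Real.one_rpow, mul_one, Real.rpow_sub_one hp.ne']
          generalize (a * x) ^ k = t at *
          field_simp)
  · have hp : 0 < a * x := by linarith
    have ha' : 0 < a := by linarith
    have hx' : 0 < x := by linarith
    have := Real.rpow_pos_of_pos hp k
    have := Real.rpow_pos_of_pos ha' k
    have : a ≤ a * x := le_mul_of_one_le_right ha h1
    exact aux_main k hk a x (a * x) (a * x) a _ (by linarith) (by linarith) (by linarith)
      (by linarith) (by linarith) (by linarith) (by linarith) (by linarith) (by linarith)
      (by rw [Real.rpow_sub_one hp.ne', Real.rpow_sub_one ha'.ne', Real.rpow_neg ha]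
          generalize (a * x) ^ k = t at *
          generalize a ^ k = s at *
          field_simp)
end

section
/- Fix an integer n ≥ 1 and a real k > 0. There exist constants C₁, C₂ > 0 depending only on n and k such that the following holds. Let x₁ ≥ x₂ ≥ … ≥ x_{n+1} and λ₁ ≥ λ₂ ≥ … ≥ λ_{n+1} be real, and assume x_n − x_{n+1} ≥ x_i − x_{i+1} for every 1 ≤ i ≤ n. Let F(y) = e^(−Σ_{i=1}^n (λ_i−λ_{n+1})(x_i−y_i)) · Π_{1≤i<j≤n} [ (y_i−y_j)(1+(λ_i−λ_j)(1+y_i−y_j))^(k−1) / (1+(λ_i−λ_j)(y_i−y_j))^k ] · Π_{r=1}^n [ Π_{s=1}^r (x_s−y_r)/(1+x_s−y_r) · Π_{s=r+1}^{n+1} (y_r−x_s)/(1+y_r−x_s) ]^(k−1). Let I be the integral of F over Π_{j=1}^n [x_{j+1}, x_j], and let I₁ be the integral of F over Π_{j=1}^{n−1} [x_{j+1}, x_j] × [(x_n+x_{n+1})/2, x_n] (i.e. the same region except y_n is restricted to [(x_n+x_{n+1})/2, x_n]). Then C₁ I ≤ I₁ ≤ C₂ I. -/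
open MeasureTheory Finset

/-- The integrand of the iterated-integral representation for the `Aₙ`
Heckman–Opdam hypergeometric function (indices are `0`-based:
`x i` for `i : Fin (n+1)` corresponds to `x_{i+1}`, etc.). -/
noncomputable def aIntegrand (n : ℕ) (k : ℝ) (x l : Fin (n + 1) → ℝ)
    (y : Fin n → ℝ) : ℝ :=
  Real.exp (-(∑ i : Fin n, (l i.castSucc - l (Fin.last n)) * (x i.castSucc - y i))) *
    (∏ i : Fin n, ∏ j ∈ Finset.Ioi i,
      (y i - y j) * (1 + (l i.castSucc - l j.castSucc) * (1 + (y i - y j))) ^ (k - 1) /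
        (1 + (l i.castSucc - l j.castSucc) * (y i - y j)) ^ k) *
    ∏ r : Fin n, (∏ s : Fin (n + 1),
      if (s : ℕ) ≤ (r : ℕ) then (x s - y r) / (1 + (x s - y r))
      else (y r - x s) / (1 + (y r - x s))) ^ (k - 1)

lemma rpow_cmp {a b p : ℝ} (ha : 0 ≤ a) (hab : a ≤ b) (hb : b ≤ 4 * a) :
    b ^ p ≤ 4 ^ |p| * a ^ p ∧ a ^ p ≤ 4 ^ |p| * b ^ p := by
  have h1 : (1 : ℝ) ≤ 4 ^ |p| := Real.one_le_rpow (by norm_num) (abs_nonneg p)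
  have hap : 0 ≤ a ^ p := Real.rpow_nonneg ha p
  have hbp : 0 ≤ b ^ p := Real.rpow_nonneg (ha.trans hab) p
  rcases le_or_gt 0 p with hp | hp
  · have e1 : b ^ p ≤ (4 * a) ^ p := Real.rpow_le_rpow (ha.trans hab) hb hp
    rw [Real.mul_rpow (by norm_num) ha] at e1
    have e2 : a ^ p ≤ b ^ p := Real.rpow_le_rpow ha hab hp
    rw [abs_of_nonneg hp] at *
    exact ⟨e1, e2.trans (le_mul_of_one_le_left hbp h1)⟩
  · rcases ha.eq_or_lt with h0 | h0
    · have : b = 0 := by linarith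
      subst this; subst h0
      exact ⟨le_mul_of_one_le_left hap h1, le_mul_of_one_le_left hap h1⟩
    · have e1 : b ^ p ≤ a ^ p := Real.rpow_le_rpow_of_nonpos h0 hab hp.le
      refine ⟨e1.trans (le_mul_of_one_le_left hap h1), ?_⟩
      have e2 : (4 * a) ^ p ≤ b ^ p := Real.rpow_le_rpow_of_nonpos (by linarith) hb hp.le
      rw [Real.mul_rpow (by norm_num) ha] at e2
      rw [abs_of_neg hp]
      calc a ^ p = 4 ^ (-p) * (4 ^ p * a ^ p) := by
            rw [← mul_assoc, ← Real.rpow_add (by norm_num)]; simp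
        _ ≤ _ := by gcongr

lemma frac_cmp {v w p : ℝ} (hv : 0 ≤ v) (hvw : v ≤ w) (hw : w ≤ 4 * v) :
    (w / (1 + w)) ^ p ≤ 4 ^ |p| * (v / (1 + v)) ^ p ∧
    (v / (1 + v)) ^ p ≤ 4 ^ |p| * (w / (1 + w)) ^ p := by
  apply rpow_cmp
  · positivity
  · rw [div_le_div_iff₀ (by linarith) (by linarith)]; nlinarith
  · rw [← mul_div_assoc, div_le_div_iff₀ (by linarith) (by linarith)]; nlinarith

lemma pair_cmp {v w Λ k : ℝ} (hk : 0 < k) (hΛ : 0 ≤ Λ) (hv : 0 ≤ v) (hvw : v ≤ w)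
    (hw : w ≤ 4 * v) :
    w * (1 + Λ * (1 + w)) ^ (k - 1) / (1 + Λ * w) ^ k ≤
      (4 * 4 ^ |k - 1|) * (v * (1 + Λ * (1 + v)) ^ (k - 1) / (1 + Λ * v) ^ k) := by
  have hΛv : 0 ≤ Λ * v := mul_nonneg hΛ hv
  have hΛw : Λ * v ≤ Λ * w := by gcongr
  have hΛw4 : Λ * w ≤ Λ * (4 * v) := by gcongr
  have h1 := (rpow_cmp (a := 1 + Λ * (1 + v)) (b := 1 + Λ * (1 + w)) (p := k - 1)
    (by nlinarith) (by nlinarith) (by nlinarith)).1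
  calc w * (1 + Λ * (1 + w)) ^ (k - 1) / (1 + Λ * w) ^ k
      ≤ (4 * v) * (4 ^ |k - 1| * (1 + Λ * (1 + v)) ^ (k - 1)) / (1 + Λ * v) ^ k := by
        have : 0 ≤ (1 + Λ * (1 + w)) ^ (k - 1) := Real.rpow_nonneg (by nlinarith) _
        gcongr
    _ = _ := by ring

lemma pair_nonneg {v Λ k : ℝ} (hΛ : 0 ≤ Λ) (hv : 0 ≤ v) :
    0 ≤ v * (1 + Λ * (1 + v)) ^ (k - 1) / (1 + Λ * v) ^ k := by positivity

/-- the last (singular) factor, lower half against the midpoint -/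
lemma last_cmp {u m k : ℝ} (hu : 0 ≤ u) (hum : u ≤ m) (hm : 0 < m) :
    (u / (1 + u)) ^ (k - 1) ≤ (u / m) ^ (min k 1 - 1) * (m / (1 + m)) ^ (k - 1) := by
  rcases le_or_gt 1 k with h | h
  · rw [min_eq_right h]
    simp only [sub_self, Real.rpow_zero, one_mul]
    apply Real.rpow_le_rpow (by positivity) _ (by linarith)
    rw [div_le_div_iff₀ (by linarith) (by linarith)]; nlinarith
  · rw [min_eq_left h.le, ← Real.mul_rpow (by positivity) (by positivity)]
    rcases hu.eq_or_lt with h0 | h0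
    · subst h0; simp
    · apply Real.rpow_le_rpow_of_nonpos (by positivity) _ (by linarith)
      rw [div_mul_div_comm, div_le_div_iff₀ (by positivity) (by positivity)]
      nlinarith [mul_pos h0 hm]

lemma fib_region {n : ℕ} {x : Fin (n + 1) → ℝ} (hx : Antitone x) {y : Fin n → ℝ}
    (hy : ∀ i, x i.succ ≤ y i ∧ y i ≤ x i.castSucc) {i j : Fin n} (hij : i < j) :
    x j.castSucc ≤ y i :=
  (hx (by rw [Fin.le_def]; simp; omega : i.succ ≤ j.castSucc)).trans (hy i).1

lemma rfac_nonneg {n : ℕ} {x : Fin (n + 1) → ℝ} (hx : Antitone x) {y : Fin n → ℝ}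
    (hy : ∀ i, x i.succ ≤ y i ∧ y i ≤ x i.castSucc) (r : Fin n) (s : Fin (n + 1)) :
    0 ≤ if (s : ℕ) ≤ (r : ℕ) then (x s - y r) / (1 + (x s - y r))
      else (y r - x s) / (1 + (y r - x s)) := by
  split_ifs with h
  · have : x r.castSucc ≤ x s := hx (by rw [Fin.le_def]; simpa using h)
    have := (hy r).2
    have : 0 ≤ x s - y r := by linarith
    positivity
  · have : x s ≤ x r.succ := hx (by rw [Fin.le_def]; simp; omega)
    have := (hy r).1
    have : 0 ≤ y r - x s := by linarith
    positivity

lemma aIntegrand_nonneg {n : ℕ} {k : ℝ} {x l : Fin (n + 1) → ℝ}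
    (hx : Antitone x) (hl : Antitone l) {y : Fin n → ℝ}
    (hy : ∀ i, x i.succ ≤ y i ∧ y i ≤ x i.castSucc) : 0 ≤ aIntegrand n k x l y := by
  unfold aIntegrand
  refine mul_nonneg (mul_nonneg (Real.exp_nonneg _) ?_) ?_
  · refine Finset.prod_nonneg fun i _ => Finset.prod_nonneg fun j hj => ?_
    have hij : i < j := Finset.mem_Ioi.1 hj
    apply pair_nonneg
    · exact sub_nonneg.2 (hl (by simpa using hij.le))
    · have := fib_region hx hy hij
      linarith [(hy j).2]
  · refine Finset.prod_nonneg fun r _ => Real.rpow_nonneg (Finset.prod_nonneg fun s _ => ?_) _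
    exact rfac_nonneg hx hy r s

noncomputable def cmpConst (m : ℕ) (k : ℝ) : ℝ :=
  (∏ i : Fin (m + 1), ∏ _j ∈ Finset.Ioi i, (4 * 4 ^ |k - 1| : ℝ)) *
    ∏ _s : Fin (m + 1), (4 ^ |k - 1| : ℝ)

lemma cmpConst_pos (m : ℕ) (k : ℝ) : 0 < cmpConst m k := by
  unfold cmpConst
  refine mul_pos (Finset.prod_pos fun i _ => Finset.prod_pos fun j _ => by positivity)
    (Finset.prod_pos fun j _ => by positivity)

lemma aIntegrand_cmp {m : ℕ} {k : ℝ} (hk : 0 < k) {x l : Fin (m + 1 + 1) → ℝ}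
    (hx : Antitone x) (hl : Antitone l) {y y' : Fin (m + 1) → ℝ}
    (hy : ∀ i, x i.succ ≤ y i ∧ y i ≤ x i.castSucc)
    (hy' : ∀ i, x i.succ ≤ y' i ∧ y' i ≤ x i.castSucc)
    (heq : ∀ i : Fin m, y i.castSucc = y' i.castSucc)
    (hle : y (Fin.last m) ≤ y' (Fin.last m))
    (h4 : x (Fin.last m).castSucc - x (Fin.last (m+1)) ≤
      4 * (x (Fin.last m).castSucc - y' (Fin.last m)))
    {D : ℝ} (hD : 0 ≤ D)
    (hlast : ((y (Fin.last m) - x (Fin.last (m+1))) /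
        (1 + (y (Fin.last m) - x (Fin.last (m+1))))) ^ (k - 1) ≤
      D * ((y' (Fin.last m) - x (Fin.last (m+1))) /
        (1 + (y' (Fin.last m) - x (Fin.last (m+1))))) ^ (k - 1)) :
    aIntegrand (m + 1) k x l y ≤ cmpConst m k * D * aIntegrand (m + 1) k x l y' := by
  have hylast := hy (Fin.last m)
  have hylast' := hy' (Fin.last m)
  rw [Fin.succ_last] at hylast hylast'
  have hyle : ∀ i, y i ≤ y' i := by
    intro i
    refine Fin.lastCases hle (fun i => (heq i).le) i
  have hexp : Real.exp (-(∑ i : Fin (m+1), (l i.castSucc - l (Fin.last (m+1))) *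
        (x i.castSucc - y i))) ≤
      Real.exp (-(∑ i : Fin (m+1), (l i.castSucc - l (Fin.last (m+1))) *
        (x i.castSucc - y' i))) := by
    apply Real.exp_le_exp.2
    apply neg_le_neg
    apply Finset.sum_le_sum
    intro i _
    have : 0 ≤ l i.castSucc - l (Fin.last (m+1)) := sub_nonneg.2 (hl (Fin.le_last _))
    have := hyle i
    gcongr
  have hpair : (∏ i : Fin (m+1), ∏ j ∈ Finset.Ioi i,
      (y i - y j) * (1 + (l i.castSucc - l j.castSucc) * (1 + (y i - y j))) ^ (k - 1) /
        (1 + (l i.castSucc - l j.castSucc) * (y i - y j)) ^ k) ≤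
      (∏ i : Fin (m + 1), ∏ _j ∈ Finset.Ioi i, (4 * 4 ^ |k - 1| : ℝ)) *
      (∏ i : Fin (m+1), ∏ j ∈ Finset.Ioi i,
      (y' i - y' j) * (1 + (l i.castSucc - l j.castSucc) * (1 + (y' i - y' j))) ^ (k - 1) /
        (1 + (l i.castSucc - l j.castSucc) * (y' i - y' j)) ^ k) := by
    simp_rw [← Finset.prod_mul_distrib]
    have hnn : ∀ i : Fin (m+1), ∀ j ∈ Finset.Ioi i, 0 ≤
        (y i - y j) * (1 + (l i.castSucc - l j.castSucc) * (1 + (y i - y j))) ^ (k - 1) /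
        (1 + (l i.castSucc - l j.castSucc) * (y i - y j)) ^ k := by
      intro i j hj
      have hij : i < j := Finset.mem_Ioi.1 hj
      apply pair_nonneg
      · exact sub_nonneg.2 (hl (by simpa using hij.le))
      · have := fib_region hx hy hij
        linarith [(hy j).2]
    refine Finset.prod_le_prod (fun i _ => Finset.prod_nonneg (hnn i)) fun i _ => ?_
    refine Finset.prod_le_prod (hnn i) fun j hj => ?_
    have hij : i < j := Finset.mem_Ioi.1 hj
    have hreg := fib_region hx hy' hij
    have hj2 := (hy' j).2
    have hii : y i = y' i := by
      obtain ⟨i', rfl⟩ : ∃ i' : Fin m, i'.castSucc = i :=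
        Fin.exists_castSucc_eq.2 (ne_of_lt (lt_of_lt_of_le hij (Fin.le_last _)))
      exact heq i'
    rw [hii]
    apply pair_cmp hk
    · exact sub_nonneg.2 (hl (by simpa using hij.le))
    · linarith
    · linarith [hyle j]
    · revert hreg hj2
      refine Fin.lastCases (fun h1 h2 => ?_) (fun j' h1 h2 => ?_) j
      · linarith
      · rw [heq j']; linarith
  have hr : (∏ r : Fin (m+1), (∏ s : Fin (m + 1 + 1),
      if (s : ℕ) ≤ (r : ℕ) then (x s - y r) / (1 + (x s - y r))
      else (y r - x s) / (1 + (y r - x s))) ^ (k - 1)) ≤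
      ((∏ _s : Fin (m + 1), (4 ^ |k - 1| : ℝ)) * D) *
      (∏ r : Fin (m+1), (∏ s : Fin (m + 1 + 1),
      if (s : ℕ) ≤ (r : ℕ) then (x s - y' r) / (1 + (x s - y' r))
      else (y' r - x s) / (1 + (y' r - x s))) ^ (k - 1)) := by
    have hn1 := rfac_nonneg hx hy
    have hn2 := rfac_nonneg hx hy'
    rw [Fin.prod_univ_castSucc, Fin.prod_univ_castSucc (n := m) (f := fun r => (∏ s : Fin (m + 1 + 1),
      if (s : ℕ) ≤ (r : ℕ) then (x s - y' r) / (1 + (x s - y' r))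
      else (y' r - x s) / (1 + (y' r - x s))) ^ (k - 1)), mul_left_comm]
    simp_rw [heq]
    refine mul_le_mul_of_nonneg_left ?_ (Finset.prod_nonneg fun r _ =>
      Real.rpow_nonneg (Finset.prod_nonneg fun s _ => hn2 _ s) _)
    rw [← Real.finsetProd_rpow _ _ (fun s _ => hn1 _ s),
      ← Real.finsetProd_rpow _ _ (fun s _ => hn2 _ s)]
    rw [Fin.prod_univ_castSucc, Fin.prod_univ_castSucc (n := m+1) (f := fun s =>
      (if (s : ℕ) ≤ (Fin.last m : ℕ) then
        (x s - y' (Fin.last m)) / (1 + (x s - y' (Fin.last m)))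
      else (y' (Fin.last m) - x s) / (1 + (y' (Fin.last m) - x s))) ^ (k - 1)),
      mul_mul_mul_comm, ← Finset.prod_mul_distrib]
    refine mul_le_mul ?_ ?_ (Real.rpow_nonneg (hn1 _ _) _) ?_
    · refine Finset.prod_le_prod (fun s _ => Real.rpow_nonneg (hn1 _ _) _) fun s _ => ?_
      have hs : ((s.castSucc : Fin (m+1+1)) : ℕ) ≤ (Fin.last m : ℕ) := by
        simp; omega
      rw [if_pos hs, if_pos hs]
      have hxs : x (Fin.last m).castSucc ≤ x s.castSucc :=
        hx (by rw [Fin.le_def]; simpa using hs)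
      exact (frac_cmp (by linarith) (by linarith) (by linarith)).1
    · have hs : ¬ (((Fin.last (m+1)) : Fin (m+1+1)) : ℕ) ≤ (Fin.last m : ℕ) := by simp
      rw [if_neg hs, if_neg hs]
      exact hlast
    · refine Finset.prod_nonneg fun s _ => mul_nonneg (by positivity)
        (Real.rpow_nonneg (hn2 _ _) _)
  have hR0 : 0 ≤ (∏ r : Fin (m+1), (∏ s : Fin (m + 1 + 1),
      if (s : ℕ) ≤ (r : ℕ) then (x s - y r) / (1 + (x s - y r))
      else (y r - x s) / (1 + (y r - x s))) ^ (k - 1)) :=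
    Finset.prod_nonneg fun r _ => Real.rpow_nonneg
      (Finset.prod_nonneg fun s _ => rfac_nonneg hx hy r s) _
  have hP0 : 0 ≤ (∏ i : Fin (m+1), ∏ j ∈ Finset.Ioi i,
      (y i - y j) * (1 + (l i.castSucc - l j.castSucc) * (1 + (y i - y j))) ^ (k - 1) /
        (1 + (l i.castSucc - l j.castSucc) * (y i - y j)) ^ k) := by
    refine Finset.prod_nonneg fun i _ => Finset.prod_nonneg fun j hj => ?_
    have hij : i < j := Finset.mem_Ioi.1 hj
    apply pair_nonneg
    · exact sub_nonneg.2 (hl (by simpa using hij.le))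
    · have := fib_region hx hy hij
      linarith [(hy j).2]
  have hE0 := Real.exp_nonneg (-(∑ i : Fin (m+1), (l i.castSucc - l (Fin.last (m+1))) *
        (x i.castSucc - y' i)))
  unfold aIntegrand cmpConst
  refine (mul_le_mul (mul_le_mul hexp hpair hP0 hE0) hr hR0
    (mul_nonneg hE0 (hP0.trans hpair))).trans (le_of_eq ?_)
  ring

lemma aIntegrand_measurable (n : ℕ) (k : ℝ) (x l : Fin (n + 1) → ℝ) :
    Measurable (aIntegrand n k x l) := by
  unfold aIntegrand
  refine Measurable.mul (Measurable.mul (by fun_prop) ?_) ?_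
  · refine Finset.measurable_fun_prod _ fun i _ => Finset.measurable_fun_prod _ fun j _ => ?_
    fun_prop
  · refine Finset.measurable_fun_prod _ fun r _ => ?_
    refine Measurable.pow_const (Finset.measurable_fun_prod _ fun s _ => ?_) _
    split_ifs <;> fun_prop

lemma lintegral_pow_bound {a m κ : ℝ} (hm : 0 < m) (hκ : 0 < κ) :
    ∫⁻ t in Set.Icc a (a + m), ENNReal.ofReal (((t - a) / m) ^ (κ - 1)) =
      ENNReal.ofReal (m / κ) := by
  have hII : IntervalIntegrable (fun t : ℝ => ((t - a) / m) ^ (κ - 1)) volume a (a + m) := by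
    have h := (intervalIntegral.intervalIntegrable_rpow' (a := 0) (b := 1) (r := κ - 1)
      (by linarith))
    have h2 := (h.comp_mul_left (c := m⁻¹)).comp_sub_right a
    simp at h2
    rw [add_comm a m]
    simpa [div_eq_inv_mul] using h2
  rw [setLIntegral_congr Ioc_ae_eq_Icc.symm,
    ← ofReal_integral_eq_lintegral_ofReal]
  · congr 1
    rw [← intervalIntegral.integral_of_le (by linarith)]
    have e := intervalIntegral.integral_comp_sub_right (a := a) (b := a + m)
      (fun u : ℝ => (u / m) ^ (κ - 1)) a
    rw [e, intervalIntegral.integral_comp_div (fun u : ℝ => u ^ (κ - 1)) hm.ne', sub_self,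
      add_sub_cancel_left, zero_div, div_self hm.ne', integral_rpow (Or.inl (by linarith))]
    simp [Real.zero_rpow hκ.ne', div_eq_mul_inv]
  · exact (intervalIntegrable_iff_integrableOn_Ioc_of_le (by linarith)).1 hII
  · filter_upwards [ae_restrict_mem measurableSet_Ioc] with t ht
    exact Real.rpow_nonneg (div_nonneg (by linarith [ht.1]) hm.le) _

noncomputable def fibConst (m : ℕ) (k : ℝ) : ℝ :=
  cmpConst m k * (1 / min k 1) * (cmpConst m k * 4 ^ |k - 1|) * 2

lemma fiber_bound {m : ℕ} {k : ℝ} (hk : 0 < k) {x l : Fin (m + 1 + 1) → ℝ}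
    (hx : Antitone x) (hl : Antitone l) (z : Fin m → ℝ)
    (hz : ∀ i : Fin m, x i.castSucc.succ ≤ z i ∧ z i ≤ x i.castSucc.castSucc)
    {a b c : ℝ} (ha : a = x (Fin.last (m+1))) (hb : b = x (Fin.last m).castSucc)
    (hc : c = (b + a) / 2) :
    ∫⁻ t in Set.Icc a c, ENNReal.ofReal
        (aIntegrand (m + 1) k x l (Fin.snoc (α := fun _ => ℝ) z t)) ≤
      ENNReal.ofReal (fibConst m k) * ∫⁻ t in Set.Icc c b, ENNReal.ofReal
        (aIntegrand (m + 1) k x l (Fin.snoc (α := fun _ => ℝ) z t)) := by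
  have hab : a ≤ b := by rw [ha, hb]; exact hx (Fin.le_last _)
  rcases hab.eq_or_lt with h | hlt
  · have : c = a := by rw [hc, h]; ring
    simp [this]
  set f : ℝ → ℝ := fun t => aIntegrand (m + 1) k x l (Fin.snoc (α := fun _ => ℝ) z t) with hf
  obtain ⟨M, rfl⟩ : ∃ M, c = a + M := ⟨c - a, by ring⟩
  have hbM : b = a + 2 * M := by linarith
  have hM : 0 < M := by linarith
  have hreg : ∀ t, a ≤ t → t ≤ b → ∀ i : Fin (m+1),
      x i.succ ≤ (Fin.snoc (α := fun _ => ℝ) z t : Fin (m+1) → ℝ) i ∧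
      (Fin.snoc (α := fun _ => ℝ) z t : Fin (m+1) → ℝ) i ≤ x i.castSucc := by
    intro t h1 h2 i
    refine Fin.lastCases ?_ (fun i => ?_) i
    · rw [Fin.snoc_last, Fin.succ_last, ← ha, ← hb]; exact ⟨h1, h2⟩
    · rw [Fin.snoc_castSucc]; exact hz i
  have hκ : 0 < min k 1 := lt_min hk one_pos
  have hK := cmpConst_pos m k
  have hf0 : 0 ≤ f (a + M) := aIntegrand_nonneg hx hl (hreg _ (by linarith) (by linarith))
  have h1 : ∀ t ∈ Set.Icc a (a + M),
      f t ≤ cmpConst m k * f (a + M) * ((t - a) / M) ^ (min k 1 - 1) := by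
    intro t ht
    have hD : 0 ≤ ((t - a) / M) ^ (min k 1 - 1) :=
      Real.rpow_nonneg (div_nonneg (by linarith [ht.1]) hM.le) _
    have := aIntegrand_cmp (y := Fin.snoc (α := fun _ => ℝ) z t)
      (y' := Fin.snoc (α := fun _ => ℝ) z (a + M)) hk hx hl
      (hreg t ht.1 (by linarith [ht.2]))
      (hreg _ (by linarith) (by linarith)) (by intro i; simp [Fin.snoc_castSucc])
      (by simpa [Fin.snoc_last] using ht.2)
      (by rw [Fin.snoc_last, ← ha, ← hb]; linarith) hD
      (by
        rw [Fin.snoc_last, Fin.snoc_last, ← ha, add_sub_cancel_left]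
        exact last_cmp (by linarith [ht.1]) (by linarith [ht.2]) hM)
    calc f t ≤ _ := this
      _ = _ := by simp only [hf]; ring
  have h2 : ∀ t ∈ Set.Icc (a + M) (a + M + M / 2),
      f (a + M) ≤ cmpConst m k * 4 ^ |k - 1| * f t := by
    intro t ht
    exact aIntegrand_cmp (y := Fin.snoc (α := fun _ => ℝ) z (a + M))
      (y' := Fin.snoc (α := fun _ => ℝ) z t) hk hx hl
      (hreg _ (by linarith) (by linarith))
      (hreg t (by linarith [ht.1]) (by linarith [ht.2]))
      (by intro i; simp [Fin.snoc_castSucc])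
      (by simpa [Fin.snoc_last] using ht.1)
      (by rw [Fin.snoc_last, ← ha, ← hb]; linarith [ht.2]) (by positivity)
      (by
        rw [Fin.snoc_last, Fin.snoc_last, ← ha]
        exact (frac_cmp (by linarith) (by linarith [ht.1]) (by linarith [ht.2])).2)
  set K := cmpConst m k with hKdef
  have hQ : 0 < K * 4 ^ |k - 1| := by positivity
  have hlow : ENNReal.ofReal (f (a + M) * (M / 2)) ≤
      ENNReal.ofReal (K * 4 ^ |k - 1|) *
        ∫⁻ t in Set.Icc (a + M) b, ENNReal.ofReal (f t) := by
    calc ENNReal.ofReal (f (a + M) * (M / 2))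
        = ∫⁻ t in Set.Icc (a + M) (a + M + M / 2), ENNReal.ofReal (f (a + M)) := by
          rw [setLIntegral_const, Real.volume_Icc, ← ENNReal.ofReal_mul hf0]
          congr 2; ring
      _ ≤ ∫⁻ t in Set.Icc (a + M) (a + M + M / 2),
            ENNReal.ofReal (K * 4 ^ |k - 1|) * ENNReal.ofReal (f t) := by
          refine setLIntegral_mono' measurableSet_Icc fun t ht => ?_
          rw [← ENNReal.ofReal_mul hQ.le]
          exact ENNReal.ofReal_le_ofReal (h2 t ht)
      _ = ENNReal.ofReal (K * 4 ^ |k - 1|) *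
            ∫⁻ t in Set.Icc (a + M) (a + M + M / 2), ENNReal.ofReal (f t) :=
          lintegral_const_mul' _ _ ENNReal.ofReal_ne_top
      _ ≤ _ := by
          gcongr
          linarith
  calc ∫⁻ t in Set.Icc a (a + M), ENNReal.ofReal (f t)
      ≤ ∫⁻ t in Set.Icc a (a + M), ENNReal.ofReal (K * f (a + M)) *
          ENNReal.ofReal (((t - a) / M) ^ (min k 1 - 1)) := by
        refine setLIntegral_mono' measurableSet_Icc fun t ht => ?_
        rw [← ENNReal.ofReal_mul (mul_nonneg hK.le hf0)]
        exact ENNReal.ofReal_le_ofReal (h1 t ht)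
    _ = ENNReal.ofReal (K * f (a + M)) * ENNReal.ofReal (M / min k 1) := by
        rw [lintegral_const_mul' _ _ ENNReal.ofReal_ne_top, lintegral_pow_bound hM hκ]
    _ = ENNReal.ofReal (K * (1 / min k 1) * 2) * ENNReal.ofReal (f (a + M) * (M / 2)) := by
        rw [← ENNReal.ofReal_mul (mul_nonneg hK.le hf0), ← ENNReal.ofReal_mul (by positivity)]
        congr 1; field_simp
    _ ≤ ENNReal.ofReal (K * (1 / min k 1) * 2) * (ENNReal.ofReal (K * 4 ^ |k - 1|) *
        ∫⁻ t in Set.Icc (a + M) b, ENNReal.ofReal (f t)) := by gcongr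
    _ = _ := by
        rw [← mul_assoc, ← ENNReal.ofReal_mul (by positivity)]
        congr 2
        unfold fibConst; rw [← hKdef]; ring

lemma setLIntegral_snoc {m : ℕ} (A B : Fin (m + 1) → ℝ) (G : (Fin (m + 1) → ℝ) → ENNReal)
    (hG : Measurable G) :
    ∫⁻ y in Set.univ.pi fun j => Set.Icc (A j) (B j), G y =
      ∫⁻ z in Set.univ.pi fun j : Fin m => Set.Icc (A j.castSucc) (B j.castSucc),
        ∫⁻ t in Set.Icc (A (Fin.last m)) (B (Fin.last m)),
          G (Fin.snoc (α := fun _ => ℝ) z t) := by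
  have hmp := (volume_preserving_piFinSuccAbove (fun _ : Fin (m+1) => ℝ) (Fin.last m)).symm
  have hpre : (MeasurableEquiv.piFinSuccAbove (fun _ : Fin (m+1) => ℝ) (Fin.last m)).symm ⁻¹'
      (Set.univ.pi fun j => Set.Icc (A j) (B j)) =
      (Set.Icc (A (Fin.last m)) (B (Fin.last m))) ×ˢ
        (Set.univ.pi fun j : Fin m => Set.Icc (A j.castSucc) (B j.castSucc)) := by
    ext ⟨t, z⟩
    simp only [Set.mem_preimage, Set.mem_univ_pi, Set.mem_prod]
    rw [Fin.forall_fin_succ']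
    simp [MeasurableEquiv.piFinSuccAbove, Fin.insertNthEquiv, Fin.insertNth_last',
      Fin.snoc_last, Fin.snoc_castSucc]
    tauto
  rw [← hmp.setLIntegral_comp_preimage_emb (MeasurableEquiv.measurableEmbedding _), hpre,
    Measure.volume_eq_prod, ← Measure.prod_restrict, lintegral_prod_symm]
  · simp [MeasurableEquiv.piFinSuccAbove, Fin.insertNthEquiv, Fin.insertNth_last']
  · exact (hG.comp (MeasurableEquiv.measurable _)).aemeasurable

theorem stmt_10 (n : ℕ) (hn : 1 ≤ n) (k : ℝ) (hk : 0 < k) :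
    ∃ C₁ C₂ : ℝ, 0 < C₁ ∧ 0 < C₂ ∧ ∀ x l : Fin (n + 1) → ℝ,
      Antitone x → Antitone l →
      (∀ i : Fin n, x i.castSucc - x i.succ ≤
        x (⟨n - 1, by omega⟩ : Fin (n + 1)) - x (Fin.last n)) →
      C₁ * (∫ y in Set.univ.pi fun j : Fin n => Set.Icc (x j.succ) (x j.castSucc),
              aIntegrand n k x l y) ≤
          (∫ y in Set.univ.pi fun j : Fin n =>
              Set.Icc (if (j : ℕ) = n - 1 then (x j.castSucc + x j.succ) / 2 else x j.succ)
                (x j.castSucc),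
            aIntegrand n k x l y) ∧
        (∫ y in Set.univ.pi fun j : Fin n =>
              Set.Icc (if (j : ℕ) = n - 1 then (x j.castSucc + x j.succ) / 2 else x j.succ)
                (x j.castSucc),
            aIntegrand n k x l y) ≤
          C₂ * (∫ y in Set.univ.pi fun j : Fin n => Set.Icc (x j.succ) (x j.castSucc),
              aIntegrand n k x l y) := by
  obtain ⟨m, rfl⟩ : ∃ m, n = m + 1 := ⟨n - 1, by omega⟩
  have hκ : 0 < min k 1 := lt_min hk one_pos
  have hK := cmpConst_pos m k
  have hfc : 0 < fibConst m k := by unfold fibConst; positivity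
  refine ⟨1 / (1 + fibConst m k), 1, by positivity, one_pos, ?_⟩
  intro x l hx hl _
  set S := Set.univ.pi fun j : Fin (m+1) => Set.Icc (x j.succ) (x j.castSucc) with hS
  set S₁ := Set.univ.pi fun j : Fin (m+1) =>
    Set.Icc (if (j : ℕ) = m + 1 - 1 then (x j.castSucc + x j.succ) / 2 else x j.succ)
      (x j.castSucc) with hS₁
  have hmS : MeasurableSet S := MeasurableSet.univ_pi fun _ => measurableSet_Icc
  have hmS₁ : MeasurableSet S₁ := MeasurableSet.univ_pi fun _ => measurableSet_Icc
  have hsub : S₁ ⊆ S := by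
    refine Set.pi_mono fun j _ => Set.Icc_subset_Icc_left ?_
    have : x j.succ ≤ x j.castSucc := hx (Fin.castSucc_lt_succ).le
    split_ifs <;> linarith
  have hnn : ∀ y ∈ S, 0 ≤ aIntegrand (m+1) k x l y := fun y hy =>
    aIntegrand_nonneg hx hl fun i => (Set.mem_univ_pi.1 hy i)
  have hmeas := aIntegrand_measurable (m+1) k x l
  have hmG : Measurable fun y => ENNReal.ofReal (aIntegrand (m+1) k x l y) := hmeas.ennreal_ofReal
  have e : ∫ y in S, aIntegrand (m+1) k x l y =
      (∫⁻ y in S, ENNReal.ofReal (aIntegrand (m+1) k x l y)).toReal := by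
    refine integral_eq_lintegral_of_nonneg_ae ?_ hmeas.aestronglyMeasurable
    filter_upwards [ae_restrict_mem hmS] with y hy using hnn y hy
  have e₁ : ∫ y in S₁, aIntegrand (m+1) k x l y =
      (∫⁻ y in S₁, ENNReal.ofReal (aIntegrand (m+1) k x l y)).toReal := by
    refine integral_eq_lintegral_of_nonneg_ae ?_ hmeas.aestronglyMeasurable
    filter_upwards [ae_restrict_mem hmS₁] with y hy using hnn y (hsub hy)
  rw [e, e₁]
  set J := ∫⁻ y in S, ENNReal.ofReal (aIntegrand (m+1) k x l y) with hJ
  set J₁ := ∫⁻ y in S₁, ENNReal.ofReal (aIntegrand (m+1) k x l y) with hJ₁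
  have hle : J₁ ≤ J := lintegral_mono_set hsub
  have hge : J ≤ ENNReal.ofReal (1 + fibConst m k) * J₁ := by
    rw [hJ, hJ₁, hS, hS₁, setLIntegral_snoc _ _ _ hmG, setLIntegral_snoc _ _ _ hmG,
      ← lintegral_const_mul' _ _ ENNReal.ofReal_ne_top]
    have hne : ∀ j : Fin m, ¬ ((j.castSucc : Fin (m+1)) : ℕ) = m + 1 - 1 := by
      intro j; have := j.2; simp; omega
    simp only [hne, if_false]
    rw [if_pos (by simp)]
    refine setLIntegral_mono' (MeasurableSet.univ_pi fun _ => measurableSet_Icc) fun z hz => ?_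
    have hz' := Set.mem_univ_pi.1 hz
    have hxx : x (Fin.last m).succ ≤ x (Fin.last m).castSucc := hx (Fin.castSucc_lt_succ).le
    have hfb := fiber_bound (k := k) (l := l) hk hx hl z hz' (a := x (Fin.last m).succ) rfl rfl rfl
    rw [← Set.Icc_union_Icc_eq_Icc (b := (x (Fin.last m).castSucc + x (Fin.last m).succ) / 2)
      (by linarith) (by linarith)]
    refine (lintegral_union_le _ _ _).trans ?_
    rw [ENNReal.ofReal_add zero_le_one hfc.le, ENNReal.ofReal_one, add_mul, one_mul, add_comm]
    gcongr
  by_cases htop : J₁ = ⊤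
  · have : J = ⊤ := top_le_iff.1 (htop ▸ hle)
    simp [this, htop]
  · have hJtop : J ≠ ⊤ := ne_top_of_le_ne_top (ENNReal.mul_ne_top ENNReal.ofReal_ne_top htop) hge
    constructor
    · have h := ENNReal.toReal_mono (ENNReal.mul_ne_top ENNReal.ofReal_ne_top htop) hge
      rw [ENNReal.toReal_mul, ENNReal.toReal_ofReal (by positivity)] at h
      rw [one_div, inv_mul_le_iff₀ (by positivity)]
      exact h
    · rw [one_mul]; exact ENNReal.toReal_mono hJtop hle
end

section
/- For all real t with 0 ≤ t ≤ log 2 and all r ∈ [0,1], one has r t ≤ log(cosh t + r sinh t) − log(cosh t − r sinh t) ≤ 2 r t. -/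
theorem stmt_13 (t r : ℝ) (ht0 : 0 ≤ t) (ht : t ≤ Real.log 2)
    (hr0 : 0 ≤ r) (hr1 : r ≤ 1) :
    r * t ≤ Real.log (Real.cosh t + r * Real.sinh t) -
        Real.log (Real.cosh t - r * Real.sinh t) ∧
      Real.log (Real.cosh t + r * Real.sinh t) -
        Real.log (Real.cosh t - r * Real.sinh t) ≤ 2 * r * t := by
  have pos : ∀ x : ℝ, 0 < Real.cosh x + r * Real.sinh x ∧ 0 < Real.cosh x - r * Real.sinh x := by
    intro x
    have h1 := Real.exp_pos x
    have h2 := Real.exp_pos (-x)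
    rw [← Real.cosh_add_sinh] at h1
    rw [← Real.cosh_sub_sinh] at h2
    have h3 := Real.cosh_pos x
    constructor <;> nlinarith
  have hd : ∀ x : ℝ, HasDerivAt (fun x => Real.log (Real.cosh x + r * Real.sinh x) -
        Real.log (Real.cosh x - r * Real.sinh x))
        (2 * r / ((Real.cosh x + r * Real.sinh x) * (Real.cosh x - r * Real.sinh x))) x := by
    intro x
    obtain ⟨p1, p2⟩ := pos x
    have a := ((Real.hasDerivAt_cosh x).fun_add ((Real.hasDerivAt_sinh x).const_mul r)).log p1.ne'
    have b := ((Real.hasDerivAt_cosh x).fun_sub ((Real.hasDerivAt_sinh x).const_mul r)).log p2.ne'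
    refine (a.fun_sub b).congr_deriv ?_
    rw [div_sub_div _ _ p1.ne' p2.ne']
    congr 1
    linear_combination (2 * r) * Real.cosh_sq_sub_sinh_sq x
  have hdiff : Differentiable ℝ (fun x => Real.log (Real.cosh x + r * Real.sinh x) -
        Real.log (Real.cosh x - r * Real.sinh x)) := fun x => (hd x).differentiableAt
  have hlow := (convex_Icc 0 (Real.log 2)).mul_sub_le_image_sub_of_le_deriv
    hdiff.continuous.continuousOn hdiff.differentiableOn (C := r) (by
      intro x hx
      have hx := interior_subset hx
      obtain ⟨p1, p2⟩ := pos x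
      rw [(hd x).deriv, le_div_iff₀ (mul_pos p1 p2)]
      have hc : Real.cosh x ≤ 5 / 4 := by
        have : Real.cosh x ≤ Real.cosh (Real.log 2) := by
          rw [Real.cosh_le_cosh, abs_of_nonneg hx.1, abs_of_nonneg (hx.1.trans hx.2)]
          exact hx.2
        rw [Real.cosh_log (by norm_num)] at this
        norm_num at this
        exact this
      have : (Real.cosh x + r * Real.sinh x) * (Real.cosh x - r * Real.sinh x) ≤ 2 := by
        nlinarith [sq_nonneg (r * Real.sinh x), Real.cosh_pos x]
      nlinarith) 0 ⟨le_rfl, ht0.trans ht⟩ t ⟨ht0, ht⟩ ht0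
  have hup := (convex_Icc 0 (Real.log 2)).image_sub_le_mul_sub_of_deriv_le
    hdiff.continuous.continuousOn hdiff.differentiableOn (C := 2 * r) (by
      intro x hx
      obtain ⟨p1, p2⟩ := pos x
      rw [(hd x).deriv, div_le_iff₀ (mul_pos p1 p2)]
      have : 1 ≤ (Real.cosh x + r * Real.sinh x) * (Real.cosh x - r * Real.sinh x) := by
        have h1 : r ^ 2 ≤ 1 := by nlinarith
        nlinarith [mul_nonneg (sub_nonneg.2 h1) (sq_nonneg (Real.sinh x)),
          Real.cosh_sq_sub_sinh_sq x]
      nlinarith) 0 ⟨le_rfl, ht0.trans ht⟩ t ⟨ht0, ht⟩ ht0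
  simp at hlow hup
  constructor <;> linarith
end

section
/- For all real t with 0 ≤ t ≤ log 2, one has t − log(cosh t + (sinh t)/2) ≥ t/8. -/
theorem stmt_14 (t : ℝ) (ht0 : 0 ≤ t) (ht : t ≤ Real.log 2) :
    t / 8 ≤ t - Real.log (Real.cosh t + Real.sinh t / 2) := by
  obtain ⟨u, hu⟩ : ∃ u, u = Real.exp (t / 8) := ⟨_, rfl⟩
  have hu0 : 0 < u := hu ▸ Real.exp_pos _
  have hu1 : 1 ≤ u := hu ▸ Real.one_le_exp (by linarith)
  have e8 : Real.exp t = u ^ 8 := by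
    rw [hu, ← Real.exp_nat_mul]; congr 1; push_cast; ring
  have e7 : Real.exp (7 * t / 8) = u ^ 7 := by
    rw [hu, ← Real.exp_nat_mul]; congr 1; push_cast; ring
  have h2 : u ^ 8 ≤ 2 := by
    rw [← e8, ← Real.exp_log (show (0 : ℝ) < 2 by norm_num)]
    exact Real.exp_le_exp.2 ht
  have hub : u ≤ 11 / 10 := by
    by_contra h
    push Not at h
    have := pow_le_pow_left₀ (by norm_num) h.le 8
    norm_num at this
    linarith
  have hb : 1 + 15 * (u - 1) ≤ u ^ 15 := by
    have := one_add_mul_le_pow (show (-2 : ℝ) ≤ u - 1 by linarith) 15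
    norm_num at this
    linarith
  have hp : 3 * u ^ 16 + 1 ≤ 4 * u ^ 15 := by
    have h1 := mul_le_mul_of_nonneg_right hb (show 0 ≤ 4 - 3 * u by linarith)
    have h3 : 0 ≤ (u - 1) * (11 / 10 - u) := mul_nonneg (by linarith) (by linarith)
    have h4 : u ^ 15 * (4 - 3 * u) = 4 * u ^ 15 - 3 * u ^ 16 := by ring
    nlinarith
  have hs : Real.cosh t + Real.sinh t / 2 = (3 * u ^ 16 + 1) / (4 * u ^ 8) := by
    rw [Real.cosh_eq, Real.sinh_eq, Real.exp_neg, e8]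
    field_simp
    ring
  have hpos : 0 < Real.cosh t + Real.sinh t / 2 := by rw [hs]; positivity
  have hle : Real.cosh t + Real.sinh t / 2 ≤ Real.exp (7 * t / 8) := by
    rw [hs, e7, div_le_iff₀ (by positivity)]
    calc _ ≤ _ := hp
      _ = _ := by ring
  have := (Real.log_le_iff_le_exp hpos).2 hle
  linarith
end

section
/- Fix a real k₁ > 0. There exist constants C₁, C₂ > 0 depending only on k₁ such that for all real t with 0 < t ≤ log 2 and all λ > 0 with λ t ≥ 1, one has C₁ (λ t)^(−k₁) ≤ ∫_{1/2}^{1} (1−r)^(k₁−1) e^(−λ (t − log(cosh t + r sinh t))) dr ≤ C₂ (λ t)^(−k₁). -/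
open MeasureTheory Real

lemma phase_bounds (t s : ℝ) (ht : 0 < t) (ht2 : t ≤ Real.log 2) (hs : 0 ≤ s) (hs2 : s ≤ 1/2) :
    0 < Real.cosh t + (1 - s) * Real.sinh t ∧
    s * t / 3 ≤ t - Real.log (Real.cosh t + (1 - s) * Real.sinh t) ∧
    t - Real.log (Real.cosh t + (1 - s) * Real.sinh t) ≤ 2 * (s * t) := by
  have hlog : Real.log 2 < 1 := by linarith [Real.log_two_lt_d9]
  set u : ℝ := s * ((1 - Real.exp (-(2*t))) / 2) with hu
  have hE : Real.cosh t + (1 - s) * Real.sinh t = Real.exp t * (1 - u) := by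
    have h1 : Real.exp t * Real.exp (-(2*t)) = Real.exp (-t) := by
      rw [← Real.exp_add]; congr 1; ring
    rw [Real.cosh_eq, Real.sinh_eq, hu, ← h1]; ring
  have hexp1 : 1 - 2 * t ≤ Real.exp (-(2*t)) := by
    have := Real.add_one_le_exp (-(2*t)); linarith
  have hexp0 : 0 < Real.exp (-(2*t)) := Real.exp_pos _
  have hexp2 : t / 3 ≤ (1 - Real.exp (-(2*t))) / 2 := by
    have h2 : 1 + 2 * t ≤ Real.exp (2*t) := by
      have := Real.add_one_le_exp (2*t); linarith
    have h3 : Real.exp (2*t) * Real.exp (-(2*t)) = 1 := by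
      rw [← Real.exp_add]; simp
    have h4 : (1 + 2 * t) * Real.exp (-(2*t)) ≤ 1 := by
      exact (mul_le_mul_of_nonneg_right h2 hexp0.le).trans h3.le
    nlinarith
  have hul : s * t / 3 ≤ u := by
    rw [hu]; nlinarith
  have huu : u ≤ s * t := by
    rw [hu]; nlinarith
  have hu0 : 0 ≤ u := le_trans (by positivity) hul
  have hu4 : u ≤ 1/4 := by
    rw [hu]; nlinarith
  have hpos : 0 < 1 - u := by linarith
  rw [hE, Real.log_mul (Real.exp_pos t).ne' hpos.ne', Real.log_exp]
  refine ⟨by positivity, ?_, ?_⟩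
  · have := Real.log_le_sub_one_of_pos hpos
    linarith
  · have h5 := Real.one_sub_inv_le_log_of_pos hpos
    have h6 : (1 - u)⁻¹ ≤ 1 + 2 * u := by
      rw [inv_le_iff_one_le_mul₀ hpos]; nlinarith
    linarith

theorem stmt_15 (k₁ : ℝ) (hk₁ : 0 < k₁) :
    ∃ C₁ C₂ : ℝ, 0 < C₁ ∧ 0 < C₂ ∧ ∀ t l : ℝ, 0 < t → t ≤ Real.log 2 → 0 < l →
      1 ≤ l * t →
      C₁ * (l * t) ^ (-k₁) ≤
          (∫ r in (1/2 : ℝ)..1, (1 - r) ^ (k₁ - 1) *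
            Real.exp (-(l * (t - Real.log (Real.cosh t + r * Real.sinh t))))) ∧
        (∫ r in (1/2 : ℝ)..1, (1 - r) ^ (k₁ - 1) *
            Real.exp (-(l * (t - Real.log (Real.cosh t + r * Real.sinh t))))) ≤
          C₂ * (l * t) ^ (-k₁) := by
  have hG : 0 < Real.Gamma k₁ := Real.Gamma_pos_of_pos hk₁
  refine ⟨Real.exp (-1) * (2:ℝ) ^ (-k₁) / k₁, Real.Gamma k₁ * (3:ℝ) ^ k₁,
    by positivity, by positivity, ?_⟩
  intro t l ht ht2 hl hlt
  set F : ℝ → ℝ := fun s => s ^ (k₁ - 1) *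
    Real.exp (-(l * (t - Real.log (Real.cosh t + (1 - s) * Real.sinh t)))) with hF
  have hI : (∫ r in (1/2 : ℝ)..1, (1 - r) ^ (k₁ - 1) *
      Real.exp (-(l * (t - Real.log (Real.cosh t + r * Real.sinh t))))) =
      ∫ s in (0:ℝ)..(1/2), F s := by
    have h := intervalIntegral.integral_comp_sub_left (a := 1/2) (b := 1) F 1
    rw [show (1:ℝ) - 1 = 0 by norm_num, show (1:ℝ) - 1/2 = 1/2 by norm_num] at h
    rw [← h]
    simp only [hF, sub_sub_cancel]
  rw [hI]
  have hintegrable : ∀ g : ℝ → ℝ, ContinuousOn g (Set.Icc 0 (1/2)) →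
      IntervalIntegrable (fun s : ℝ => s ^ (k₁ - 1) * g s) volume 0 (1/2) := by
    intro g hg
    refine (intervalIntegral.intervalIntegrable_rpow' (by linarith)).mul_continuousOn ?_
    rwa [Set.uIcc_of_le (by norm_num)]
  have hFint : IntervalIntegrable F volume 0 (1/2) := by
    apply hintegrable
    have : ContinuousOn (fun s => Real.log (Real.cosh t + (1 - s) * Real.sinh t))
        (Set.Icc 0 (1/2)) := by
      apply ContinuousOn.log (by fun_prop)
      intro s hs
      exact (phase_bounds t s ht ht2 hs.1 hs.2).1.ne'
    fun_prop
  have hm : 0 < l * t := by linarith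
  constructor
  · have hb0 : 0 < 1 / (2 * (l * t)) := by positivity
    have hb : 1 / (2 * (l * t)) ≤ 1 / 2 := by
      apply one_div_le_one_div_of_le <;> linarith
    have hF0 : ∀ s, 0 ≤ s → 0 ≤ F s := fun s hs =>
      mul_nonneg (Real.rpow_nonneg hs _) (Real.exp_pos _).le
    have h1 : ∫ s in (0:ℝ)..(1 / (2 * (l * t))), F s ≤ ∫ s in (0:ℝ)..(1/2), F s := by
      apply intervalIntegral.integral_mono_interval le_rfl hb0.le hb _ hFint
      filter_upwards [ae_restrict_mem measurableSet_Ioc] with s hs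
      exact hF0 s hs.1.le
    refine le_trans ?_ h1
    have h2 : ∫ s in (0:ℝ)..(1 / (2 * (l * t))), s ^ (k₁ - 1) * Real.exp (-1) ≤
        ∫ s in (0:ℝ)..(1 / (2 * (l * t))), F s := by
      have hsub : Set.uIcc 0 (1 / (2 * (l * t))) ⊆ Set.uIcc (0:ℝ) (1/2) := by
        rw [Set.uIcc_of_le hb0.le, Set.uIcc_of_le (by norm_num)]
        exact Set.Icc_subset_Icc le_rfl hb
      apply intervalIntegral.integral_mono_on hb0.le
        ((hintegrable (fun _ => Real.exp (-1)) continuousOn_const).mono_set hsub) (hFint.mono_set hsub)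
      intro s hs
      apply mul_le_mul_of_nonneg_left _ (Real.rpow_nonneg hs.1 _)
      apply Real.exp_le_exp.2
      have h3 := (phase_bounds t s ht ht2 hs.1 (hs.2.trans hb)).2.2
      have h4 : s * (2 * (l * t)) ≤ 1 := (le_div_iff₀ (by positivity)).1 hs.2
      nlinarith
    refine le_trans (le_of_eq ?_) h2
    rw [intervalIntegral.integral_mul_const, integral_rpow (Or.inl (by linarith))]
    simp only [sub_add_cancel]
    rw [Real.zero_rpow hk₁.ne', one_div, Real.inv_rpow (by positivity),
      ← Real.rpow_neg (by positivity), Real.mul_rpow (by norm_num) hm.le]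
    ring
  · have hG2 := Real.integral_rpow_mul_exp_neg_mul_Ioi hk₁ (r := l * t / 3) (by positivity)
    have hGi : IntegrableOn (fun s : ℝ => s ^ (k₁ - 1) * Real.exp (-(l * t / 3 * s)))
        (Set.Ioi 0) := by
      apply MeasureTheory.Integrable.of_integral_ne_zero
      rw [hG2]; positivity
    have h1 : ∫ s in (0:ℝ)..(1/2), F s ≤
        ∫ s in (0:ℝ)..(1/2), s ^ (k₁ - 1) * Real.exp (-(l * t / 3 * s)) := by
      apply intervalIntegral.integral_mono_on (by norm_num) hFint
        (hintegrable (fun s => Real.exp (-(l * t / 3 * s))) (by fun_prop))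
      intro s hs
      apply mul_le_mul_of_nonneg_left _ (Real.rpow_nonneg hs.1 _)
      apply Real.exp_le_exp.2
      have h3 := (phase_bounds t s ht ht2 hs.1 hs.2).2.1
      nlinarith
    refine h1.trans ?_
    rw [intervalIntegral.integral_of_le (by norm_num)]
    have h2 := setIntegral_mono_set (μ := volume) (s := Set.Ioc (0:ℝ) (1/2)) hGi
      (by
        filter_upwards [ae_restrict_mem measurableSet_Ioi] with s hs
        exact mul_nonneg (Real.rpow_nonneg (le_of_lt hs) _) (Real.exp_pos _).le)
      (Set.Ioc_subset_Ioi_self.eventuallyLE)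
    refine h2.trans (le_of_eq ?_)
    rw [hG2, one_div_div, Real.div_rpow (by norm_num) hm.le, Real.rpow_neg hm.le]
    ring
end

section
/- Let a₀ ≥ 0, b₀ ≥ 0 and c₀ > 0 be real numbers. Let a, b, c, w be real numbers with |a| ≤ a₀, |b| ≤ b₀, c ≥ c₀ and 0 ≤ w ≤ 1/2. Define the Gauss hypergeometric series F(a, b; c; w) = Σ_{n=0}^∞ ((a)ₙ (b)ₙ / ((c)ₙ n!)) wⁿ, where (x)ₙ = x(x+1)⋯(x+n−1) is the rising factorial (Pochhammer symbol). Then |F(a, b; c; w) − 1| ≤ (a₀ b₀ / c₀) · F(a₀+1, b₀+1; c₀+1; 1/2) · w. -/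
open Finset

/-- The rising factorial (Pochhammer symbol) `(x)ₙ = x (x+1) ⋯ (x+n-1)`. -/
noncomputable def poch (x : ℝ) (n : ℕ) : ℝ := ∏ i ∈ Finset.range n, (x + i)

/-- The Gauss hypergeometric series `₂F₁(a, b; c; w)`. -/
noncomputable def gaussF (a b c w : ℝ) : ℝ :=
  ∑' n : ℕ, poch a n * poch b n / (poch c n * n.factorial) * w ^ n

theorem poch_succ (x : ℝ) (n : ℕ) : poch x (n + 1) = poch x n * (x + n) := by
  simp [poch, Finset.prod_range_succ]

theorem poch_succ_left (x : ℝ) (n : ℕ) : poch x (n + 1) = x * poch (x + 1) n := by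
  simp only [poch, Finset.prod_range_succ']
  rw [mul_comm]
  simp only [Nat.cast_zero, add_zero, Nat.cast_add, Nat.cast_one]
  congr 1
  exact Finset.prod_congr rfl fun i _ => by ring

theorem poch_pos {x : ℝ} (hx : 0 < x) (n : ℕ) : 0 < poch x n :=
  Finset.prod_pos fun i _ => by positivity

theorem poch_nonneg {x : ℝ} (hx : 0 ≤ x) (n : ℕ) : 0 ≤ poch x n :=
  Finset.prod_nonneg fun i _ => by positivity

theorem poch_mono {x y : ℝ} (hx : 0 ≤ x) (h : x ≤ y) (n : ℕ) : poch x n ≤ poch y n :=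
  Finset.prod_le_prod (fun i _ => by positivity) fun i _ => by linarith

theorem abs_poch_le {x y : ℝ} (h : |x| ≤ y) (n : ℕ) : |poch x n| ≤ poch y n := by
  unfold poch
  rw [Finset.abs_prod]
  refine Finset.prod_le_prod (fun i _ => abs_nonneg _) fun i _ => ?_
  have h1 := abs_add_le x (i : ℝ)
  rw [Nat.abs_cast] at h1
  linarith

theorem summable_gauss {A B C : ℝ} (hA : 0 < A) (hB : 0 < B) (hC : 0 < C) :
    Summable fun n : ℕ =>
      poch A n * poch B n / (poch C n * n.factorial) * (1 / 2 : ℝ) ^ n := by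
  have hpos : ∀ n : ℕ,
      0 < poch A n * poch B n / (poch C n * n.factorial) * (1 / 2 : ℝ) ^ n := by
    intro n
    have := poch_pos hA n
    have := poch_pos hB n
    have := poch_pos hC n
    positivity
  refine summable_of_ratio_test_tendsto_lt_one (l := 1 / 2) (by norm_num)
    (Filter.Eventually.of_forall fun n => (hpos n).ne') ?_
  have h1 := tendsto_add_mul_div_add_mul_atTop_nhds A 1 (1 : ℝ) (d := 1) one_ne_zero
  have h2 := tendsto_add_mul_div_add_mul_atTop_nhds B C (1 : ℝ) (d := 1) one_ne_zero
  have h3 := (h1.mul h2).mul_const (1 / 2 : ℝ)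
  norm_num only at h3
  refine h3.congr fun n => ?_
  rw [Real.norm_of_nonneg (hpos _).le, Real.norm_of_nonneg (hpos _).le]
  have := poch_pos hA n
  have := poch_pos hB n
  have := poch_pos hC n
  have : (0 : ℝ) < n.factorial := by positivity
  have : C + n ≠ 0 := by positivity
  have : (n : ℝ) + 1 ≠ 0 := by positivity
  have : (1 : ℝ) + n ≠ 0 := by positivity
  simp only [poch_succ, Nat.factorial_succ, Nat.cast_mul, Nat.cast_add, Nat.cast_one, pow_succ,
    one_mul]
  field_simp
  ring

theorem stmt_16 (a₀ b₀ c₀ a b c w : ℝ) (ha₀ : 0 ≤ a₀) (hb₀ : 0 ≤ b₀)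
    (hc₀ : 0 < c₀) (ha : |a| ≤ a₀) (hb : |b| ≤ b₀) (hc : c₀ ≤ c)
    (hw0 : 0 ≤ w) (hw : w ≤ 1 / 2) :
    |gaussF a b c w - 1| ≤
      a₀ * b₀ / c₀ * gaussF (a₀ + 1) (b₀ + 1) (c₀ + 1) (1 / 2) * w := by
  have hS := summable_gauss (A := a₀ + 1) (B := b₀ + 1) (C := c₀ + 1)
    (by positivity) (by positivity) (by positivity)
  have hG := (hS.hasSum.mul_left (a₀ * b₀ / c₀)).mul_right w
  have key : ∀ n : ℕ,
      ‖poch a (n + 1) * poch b (n + 1) / (poch c (n + 1) * (n + 1).factorial) * w ^ (n + 1)‖ ≤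
      a₀ * b₀ / c₀ * (poch (a₀ + 1) n * poch (b₀ + 1) n / (poch (c₀ + 1) n * n.factorial)
        * (1 / 2 : ℝ) ^ n) * w := by
    intro n
    have hcp := poch_pos (hc₀.trans_le hc) (n + 1)
    have hc0p := poch_pos hc₀ (n + 1)
    have hc1p := poch_pos (x := c₀ + 1) (by positivity) n
    have ha0p := poch_nonneg ha₀ (n + 1)
    have hb0p := poch_nonneg hb₀ (n + 1)
    have hf : (n.factorial : ℝ) ≤ (n + 1).factorial := by
      exact_mod_cast Nat.factorial_le (Nat.le_succ n)
    have hfp : (0 : ℝ) < n.factorial := by positivity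
    rw [Real.norm_eq_abs, abs_mul, abs_div, abs_mul, abs_of_nonneg (pow_nonneg hw0 _),
      abs_of_pos (a := poch c (n + 1) * _) (by positivity)]
    calc _ ≤ poch a₀ (n + 1) * poch b₀ (n + 1) / (poch c₀ (n + 1) * n.factorial)
          * ((1 / 2) ^ n * w) := by
          rw [pow_succ]
          have e1 := abs_poch_le ha (n + 1)
          have e2 := abs_poch_le hb (n + 1)
          have e3 := poch_mono hc₀.le hc (n + 1)
          gcongr
      _ = _ := by
          simp only [poch_succ_left]
          field_simp
  have hsum : Summable fun n : ℕ =>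
      poch a n * poch b n / (poch c n * n.factorial) * w ^ n := by
    rw [← summable_nat_add_iff 1]
    exact Summable.of_norm_bounded hG.summable key
  have hb := tsum_of_norm_bounded hG key
  have e : gaussF a b c w - 1 = ∑' n : ℕ,
      poch a (n + 1) * poch b (n + 1) / (poch c (n + 1) * (n + 1).factorial) * w ^ (n + 1) := by
    unfold gaussF
    rw [hsum.tsum_eq_zero_add]
    simp [poch]
  rw [e]
  exact hb
end
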